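/- Let u⁺ ⊆ ℝ² be the closed unit disk centered at the origin. The neighborhood N⁺_{u⁺, 7.25} = {(x,y) ∈ ℤ² : x² + y² ≤ 7.25²} ∖ {(0,0)} can perform crossing: for some n there exist vectors n̄,ē,s̄,w̄ ∈ E_n and a crossing configuration of size n×n with these vectors for the sandpile dynamics with this neighborhood. -/

import Mathlib

open Finset

/-- Vertices of the two-dimensional grid. -/
abbrev Vertex := ℤ × ℤ

/-- A configuration assigns a number of grains to each vertex. -/
abbrev Config := Vertex → ℕ

/-- Parallel abelian sandpile dynamics with uniform neighborhood `N`: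
`F(c)(v) = c(v) - p·𝟙[c(v) ≥ p] + |{u | v - u ∈ N ∧ c(u) ≥ p}|` with `p = |N|`.
(The vertices `u` with `v - u ∈ N` are exactly the `v - d` for `d ∈ N`.) -/
def sandF (N : Finset Vertex) (c : Config) : Config := fun v =>
  (c v - if N.card ≤ c v then N.card else 0)
    + (N.filter (fun d => N.card ≤ c (v - d))).card

/-- A configuration is stable when every vertex has fewer than `p = |N|` grains. -/
def Stable (N : Finset Vertex) (c : Config) : Prop := ∀ v, c v < N.card

/-- The set of unstable vertices of a configuration. -/
def Act (N : Finset Vertex) (c : Config) : Set Vertex := {v | N.card ≤ c v}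

/-- A configuration is finite when only finitely many vertices carry grains. -/
def FiniteConf (c : Config) : Prop := {v | 0 < c v}.Finite

/-- A configuration has size `n × m` (positioned at the origin). -/
def HasSize (n m : ℕ) (c : Config) : Prop :=
  ∀ v : Vertex, ¬(0 ≤ v.1 ∧ v.1 < (n : ℤ) ∧ 0 ≤ v.2 ∧ v.2 < (m : ℤ)) → c v = 0

/-- A vector of `E_n`: entries in `{0,1}`, supported on indices `< n`,
with exactly one entry equal to `1`. -/
def IsUnitVec (n : ℕ) (e : ℕ → ℕ) : Prop :=
  (∀ i, e i ≤ 1) ∧ (∀ i, n ≤ i → e i = 0) ∧ (∃! i, e i = 1)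

/-- Positioning of a vector on the north border: `N(ē)(x,y) = ē(x)` if `y = 0`. -/
def confN (n : ℕ) (e : ℕ → ℕ) : Config := fun v =>
  if v.2 = 0 ∧ 0 ≤ v.1 ∧ v.1 < (n : ℤ) then e v.1.toNat else 0

/-- Positioning of a vector on the south border: `S(ē)(x,y) = ē(x)` if `y = n-1`. -/
def confS (n : ℕ) (e : ℕ → ℕ) : Config := fun v =>
  if v.2 = (n : ℤ) - 1 ∧ 0 ≤ v.1 ∧ v.1 < (n : ℤ) then e v.1.toNat else 0

/-- Positioning of a vector on the west border: `W(ē)(x,y) = ē(y)` if `x = 0`. -/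
def confW (n : ℕ) (e : ℕ → ℕ) : Config := fun v =>
  if v.1 = 0 ∧ 0 ≤ v.2 ∧ v.2 < (n : ℤ) then e v.2.toNat else 0

/-- Positioning of a vector on the east border: `E(ē)(x,y) = ē(y)` if `x = n-1`. -/
def confE (n : ℕ) (e : ℕ → ℕ) : Config := fun v =>
  if v.1 = (n : ℤ) - 1 ∧ 0 ≤ v.2 ∧ v.2 < (n : ℤ) then e v.2.toNat else 0

/-- `c` is a transporter from west to east with vectors `w, e`. -/
def TransporterWE (N : Finset Vertex) (n : ℕ) (c : Config) (w e : ℕ → ℕ) : Prop :=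
  ∃ t : ℕ, Act N ((sandF N)^[t] (c + confW n w)) = {v : Vertex | confE n e v = 1}

/-- `c` is a transporter from north to south with vectors `nv, s`. -/
def TransporterNS (N : Finset Vertex) (n : ℕ) (c : Config) (nv s : ℕ → ℕ) : Prop :=
  ∃ t : ℕ, Act N ((sandF N)^[t] (c + confN n nv)) = {v : Vertex | confS n s v = 1}

/-- `c` has west vector `w` isolated to the south. -/
def IsolatedWS (N : Finset Vertex) (n : ℕ) (c : Config) (w : ℕ → ℕ) : Prop :=
  ∀ t : ℕ, ∀ v ∈ Act N ((sandF N)^[t] (c + confW n w)), v.2 ≠ (n : ℤ) - 1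

/-- `c` has north vector `nv` isolated to the east. -/
def IsolatedNE (N : Finset Vertex) (n : ℕ) (c : Config) (nv : ℕ → ℕ) : Prop :=
  ∀ t : ℕ, ∀ v ∈ Act N ((sandF N)^[t] (c + confN n nv)), v.1 ≠ (n : ℤ) - 1

/-- `c` is a crossing configuration of size `n × n` with vectors `nv, e, s, w ∈ E_n`. -/
def CrossingConfig (N : Finset Vertex) (n : ℕ) (c : Config)
    (nv e s w : ℕ → ℕ) : Prop :=
  IsUnitVec n nv ∧ IsUnitVec n e ∧ IsUnitVec n s ∧ IsUnitVec n w ∧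
  Stable N c ∧ HasSize n n c ∧
  TransporterWE N n c w e ∧ IsolatedWS N n c w ∧
  TransporterNS N n c nv s ∧ IsolatedNE N n c nv

/-- A neighborhood can perform crossing when some crossing configuration exists. -/
def CanCross (N : Finset Vertex) : Prop :=
  ∃ (n : ℕ) (c : Config) (nv e s w : ℕ → ℕ), CrossingConfig N n c nv e s w

/-- The neighborhood of a shape `s ⊆ ℝ²` with scaling ratio `r`. -/
def shapeNbhd (s : Set (ℝ × ℝ)) (r : ℝ) : Set Vertex :=
  {v : Vertex | (((v.1 : ℝ) / r, (v.2 : ℝ) / r) : ℝ × ℝ) ∈ s} \ {((0 : ℤ), (0 : ℤ))}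

/-- A set `s ⊆ ℝ²` is non-flat when every point of `s` is a vertex of a triangle of
strictly positive area (three non-collinear points) entirely contained in `s`. -/
def NonFlat (s : Set (ℝ × ℝ)) : Prop :=
  ∀ x ∈ s, ∃ b c : ℝ × ℝ, ¬ Collinear ℝ ({x, b, c} : Set (ℝ × ℝ)) ∧
    convexHull ℝ ({x, b, c} : Set (ℝ × ℝ)) ⊆ s

/-!
If firing every vertex of a finite set `P` once turns `c` into a stable configuration, then the
dynamics started at `c` never leaves `P` and fires no vertex twice. It is therefore a threshold
growth process: a vertex fires as soon as its initial grains, together with those sent by the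
vertices that have already fired, reach `p`. Checking such a `P` is a finite computation.

For the crossing, each vertex of a track is given an initial deficit greater than the number of
grains it can receive from the other track, so that neither avalanche spreads to the other one; its
own avalanche is locally thick enough to make up for this deficit.
-/

section LeastAction

variable (N : Finset Vertex) (c : Config) (P R : Finset Vertex) (v : Vertex)

/-- The number of grains that `v` receives when every vertex of `R` fires once. -/
def received : ℕ := #{u ∈ R | v - u ∈ N}

/-- The configuration obtained from `c` when every vertex of `R` has fired exactly once.
The subtraction is truncated, hence meaningful only when the vertices of `R` have enough grains. -/
def fireOnce : Config := fun v =>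
  c v + received N R v - if v ∈ R then #N else 0

/-- One step of the threshold growth process inside `P`: the vertices of `P` that have at least `#N`
grains when those they receive from `R` are added and none is removed. -/
def growthStep : Finset Vertex :=
  {v ∈ P | #N ≤ c v + received N R v}

/-- The vertices reached by the threshold growth process inside `P` before time `t`. -/
def firedBefore (t : ℕ) : Finset Vertex :=
  (growthStep N c P)^[t] ∅

/-- The vertices reached by the threshold growth process inside `P` exactly at time `t`. -/
def firedAt (t : ℕ) : Finset Vertex :=
  firedBefore N c P (t + 1) \ firedBefore N c P t

lemma received_mono : Monotone (received N · v) :=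
  fun _ _ h => card_le_card (filter_subset_filter _ h)

lemma received_le_card : received N R v ≤ #R :=
  card_filter_le _ _

lemma card_filter_sub_mem_eq_received : #{d ∈ N | v - d ∈ R} = received N R v :=
  card_nbij' (v - ·) (v - ·) (by simp +contextual [Set.MapsTo])
    (by simp +contextual [Set.MapsTo]) (by simp [Set.LeftInvOn]) (by simp [Set.LeftInvOn])

lemma growthStep_mono : Monotone (growthStep N c P) :=
  fun _ _ h => monotone_filter_right P fun v _ hv =>
    hv.trans (Nat.add_le_add_left (received_mono N v h) _)

lemma firedBefore_succ (t : ℕ) :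
    firedBefore N c P (t + 1) = growthStep N c P (firedBefore N c P t) :=
  Function.iterate_succ_apply' ..

lemma firedBefore_mono : Monotone (firedBefore N c P) :=
  (growthStep_mono N c P).monotone_iterate_of_le_map (empty_subset _)

lemma firedBefore_subset (t : ℕ) : firedBefore N c P t ⊆ P :=
  (firedBefore_mono N c P t.le_succ).trans (firedBefore_succ N c P t ▸ filter_subset _ _)

lemma firedAt_subset (t : ℕ) : firedAt N c P t ⊆ P :=
  sdiff_subset.trans (firedBefore_subset N c P (t + 1))

variable {N c P R v}

lemma received_union_of_disjoint {A B : Finset Vertex} (h : Disjoint A B) :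
    received N (A ∪ B) v = received N A v + received N B v := by
  simp only [received, filter_union, card_union_of_disjoint (disjoint_filter_filter h)]

lemma card_le_fireOnce_iff (hP : Stable N (fireOnce N c P)) (hRP : R ⊆ P) :
    #N ≤ fireOnce N c R v ↔ v ∈ growthStep N c P R \ R := by
  have hmono : received N R v ≤ received N P v := received_mono N v hRP
  have hstable := hP v
  by_cases hvR : v ∈ R
  · simp only [fireOnce, hRP hvR, hvR, if_true, mem_sdiff, not_true, and_false,
      iff_false] at hstable ⊢
    omega
  · have hP_closed : #N ≤ c v + received N R v → v ∈ P := by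
      intro hthreshold
      by_contra hvP
      simp only [fireOnce, hvP, if_false] at hstable
      omega
    simpa [fireOnce, growthStep, hvR] using hP_closed

lemma sandF_fireOnce (hP : Stable N (fireOnce N c P)) (hRP : R ⊆ P)
    (hR : R ⊆ growthStep N c P R) :
    sandF N (fireOnce N c R) = fireOnce N c (growthStep N c P R) := by
  funext v
  have hunstable := card_le_fireOnce_iff (v := v) hP hRP
  have hreceived : received N (growthStep N c P R) v
      = received N R v + received N (growthStep N c P R \ R) v := by
    rw [← received_union_of_disjoint disjoint_sdiff, union_sdiff_of_subset hR]
  simp only [sandF, card_le_fireOnce_iff hP hRP, card_filter_sub_mem_eq_received]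
  by_cases hvR : v ∈ R
  · have henough : #N ≤ c v + received N R v := (mem_filter.mp (hR hvR)).2
    simp only [fireOnce, hreceived, hR hvR, hvR, mem_sdiff, if_true, not_true, and_false, if_false]
    omega
  · simp only [fireOnce, hreceived, hvR, mem_sdiff, not_false_eq_true, and_true, if_false]
      at hunstable ⊢
    split_ifs with hv
    · have := hunstable.mpr hv
      omega
    · omega

theorem iterate_sandF_eq_fireOnce (hP : Stable N (fireOnce N c P)) (t : ℕ) :
    (sandF N)^[t] c = fireOnce N c (firedBefore N c P t) := by
  induction t with
  | zero =>
    funext v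
    simp [fireOnce, firedBefore, received]
  | succ t ih =>
    have hgrow := firedBefore_mono N c P t.le_succ
    rw [firedBefore_succ] at hgrow
    rw [Function.iterate_succ_apply', ih, firedBefore_succ,
      sandF_fireOnce hP (firedBefore_subset N c P t) hgrow]

theorem act_iterate_sandF_eq_firedAt (hP : Stable N (fireOnce N c P)) (t : ℕ) :
    Act N ((sandF N)^[t] c) = firedAt N c P t := by
  ext v
  rw [iterate_sandF_eq_fireOnce hP, firedAt, firedBefore_succ]
  exact card_le_fireOnce_iff hP (firedBefore_subset N c P t)

theorem act_iterate_sandF_subset (hP : Stable N (fireOnce N c P)) (t : ℕ) :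
    Act N ((sandF N)^[t] c) ⊆ P := by
  rw [act_iterate_sandF_eq_firedAt hP]
  exact coe_subset.mpr (firedAt_subset N c P t)

lemma stable_fireOnce_of_support {S : Finset Vertex} (hS : ∀ v ∉ S, c v = 0) (hPN : #P < #N)
    (h : ∀ v ∈ S, fireOnce N c P v < #N) : Stable N (fireOnce N c P) := by
  intro v
  by_cases hv : v ∈ S
  · exact h v hv
  · have := received_le_card N P v
    simp only [fireOnce, hS v hv]
    omega

end LeastAction

section Crossing

lemma isUnitVec_single {n j : ℕ} (hj : j < n) : IsUnitVec n (Pi.single j 1) := by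
  refine ⟨fun i => ?_, fun i hi => Pi.single_eq_of_ne (by omega) 1, j, Pi.single_eq_same j 1,
    fun i hi => ?_⟩
  · rw [Pi.single_apply]
    split_ifs <;> simp
  · by_contra hij
    simp [Pi.single_eq_of_ne hij] at hi

lemma confW_single {n j : ℕ} (hj : j < n) :
    confW n (Pi.single j 1) = Pi.single (0, (j : ℤ)) 1 := by
  ext ⟨x, y⟩
  grind [confW]

lemma confN_single {n j : ℕ} (hj : j < n) :
    confN n (Pi.single j 1) = Pi.single ((j : ℤ), 0) 1 := by
  ext ⟨x, y⟩
  grind [confN]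

lemma confE_single {n j : ℕ} (hj : j < n) :
    confE n (Pi.single j 1) = Pi.single ((n : ℤ) - 1, (j : ℤ)) 1 := by
  ext ⟨x, y⟩
  grind [confE]

lemma confS_single {n j : ℕ} (hj : j < n) :
    confS n (Pi.single j 1) = Pi.single ((j : ℤ), (n : ℤ) - 1) 1 := by
  ext ⟨x, y⟩
  grind [confS]

lemma setOf_single_eq_one (u : Vertex) : {v | (Pi.single u 1 : Config) v = 1} = {u} := by
  ext v
  simp [Pi.single_apply]

variable {N P : Finset Vertex} {n : ℕ} {c : Config}

lemma transporterWE_single {w e t : ℕ} (hw : w < n) (he : e < n)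
    (hP : Stable N (fireOnce N (c + Pi.single (0, (w : ℤ)) 1) P))
    (ht : firedAt N (c + Pi.single (0, (w : ℤ)) 1) P t = {((n : ℤ) - 1, (e : ℤ))}) :
    TransporterWE N n c (Pi.single w 1) (Pi.single e 1) := by
  refine ⟨t, ?_⟩
  rw [confW_single hw, confE_single he, setOf_single_eq_one, act_iterate_sandF_eq_firedAt hP, ht,
    coe_singleton]

lemma transporterNS_single {nv s t : ℕ} (hnv : nv < n) (hs : s < n)
    (hP : Stable N (fireOnce N (c + Pi.single ((nv : ℤ), 0) 1) P))
    (ht : firedAt N (c + Pi.single ((nv : ℤ), 0) 1) P t = {((s : ℤ), (n : ℤ) - 1)}) :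
    TransporterNS N n c (Pi.single nv 1) (Pi.single s 1) := by
  refine ⟨t, ?_⟩
  rw [confN_single hnv, confS_single hs, setOf_single_eq_one, act_iterate_sandF_eq_firedAt hP, ht,
    coe_singleton]

lemma isolatedWS_single {w : ℕ} (hw : w < n)
    (hP : Stable N (fireOnce N (c + Pi.single (0, (w : ℤ)) 1) P))
    (hsouth : ∀ v ∈ P, v.2 ≠ (n : ℤ) - 1) : IsolatedWS N n c (Pi.single w 1) := by
  intro t v hv
  rw [confW_single hw] at hv
  exact hsouth v (act_iterate_sandF_subset hP t hv)

lemma isolatedNE_single {nv : ℕ} (hnv : nv < n)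
    (hP : Stable N (fireOnce N (c + Pi.single ((nv : ℤ), 0) 1) P))
    (heast : ∀ v ∈ P, v.1 ≠ (n : ℤ) - 1) : IsolatedNE N n c (Pi.single nv 1) := by
  intro t v hv
  rw [confN_single hnv] at hv
  exact heast v (act_iterate_sandF_subset hP t hv)

end Crossing

/-- The integer points of the plane at distance between `1` and `√k` from the origin. The box that
is filtered keeps this finset small enough to be enumerated. -/
noncomputable def latticeDisk (k : ℕ) : Finset Vertex :=
  {v ∈ Icc (-(k.sqrt : ℤ)) k.sqrt ×ˢ Icc (-(k.sqrt : ℤ)) k.sqrt |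
    v.1 ^ 2 + v.2 ^ 2 ≤ (k : ℤ) ∧ v ≠ (0, 0)}

lemma mem_latticeDisk {k : ℕ} {v : Vertex} :
    v ∈ latticeDisk k ↔ v.1 ^ 2 + v.2 ^ 2 ≤ (k : ℤ) ∧ v ≠ (0, 0) := by
  have mem_box {x : ℤ} (hx : x ^ 2 ≤ k) : x ∈ Icc (-(k.sqrt : ℤ)) k.sqrt := by
    have : x.natAbs ≤ k.sqrt := Nat.le_sqrt'.mpr (by zify; simpa using hx)
    rw [mem_Icc]
    omega
  simp only [latticeDisk, mem_filter, mem_product, and_iff_right_iff_imp, and_imp]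
  exact fun h _ => ⟨mem_box (by linarith [sq_nonneg v.2]), mem_box (by linarith [sq_nonneg v.1])⟩

lemma coe_latticeDisk_floor_sq (r : ℝ) :
    (latticeDisk ⌊r ^ 2⌋₊ : Set Vertex) =
      {v : Vertex | (v.1 : ℝ) ^ 2 + (v.2 : ℝ) ^ 2 ≤ r ^ 2} \ {(0, 0)} := by
  ext v
  have hfloor : v.1 ^ 2 + v.2 ^ 2 ≤ (⌊r ^ 2⌋₊ : ℤ) ↔ (v.1 : ℝ) ^ 2 + (v.2 : ℝ) ^ 2 ≤ r ^ 2 := by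
    rw [Int.natCast_floor_eq_floor (sq_nonneg r), Int.le_floor]
    push_cast
    rfl
  simp [mem_latticeDisk, hfloor]

lemma card_latticeDisk_52 : #(latticeDisk 52) = 168 := by
  decide +kernel

/-- The vertices fired by the avalanche from west to east, one row per time step. -/
def westEastTrack : Finset Vertex :=
  {(0, 14),
   (1, 14), (1, 15), (2, 14), (2, 15),
   (7, 14), (8, 14),
   (14, 14),
   (21, 14)}

/-- The vertices fired by the avalanche from north to south, one row per time step. -/
def northSouthTrack : Finset Vertex :=
  {(10, 0),
   (10, 7), (11, 7),
   (9, 7),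
   (9, 8),
   (10, 14),
   (10, 21)}

/-- The number of grains that a vertex of the tracks is missing to become unstable. It is greater
than the number of grains that this vertex receives from the avalanche of the other track. -/
def crossThreshold (v : Vertex) : ℕ :=
  if v = (8, 14) ∨ v = (10, 14) then 4
  else if v = (7, 14) ∨ v = (9, 8) then 3
  else if v = (14, 14) ∨ v = (9, 7) then 2
  else 1

/-- A crossing configuration of size `22 × 22` for `latticeDisk 52`, in which `p = 168`. -/
def crossConfig : Config := fun v =>
  if v ∈ westEastTrack ∪ northSouthTrack then 168 - crossThreshold v else 0

lemma stable_crossConfig : Stable (latticeDisk 52) crossConfig := by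
  intro v
  rw [card_latticeDisk_52]
  simp only [crossConfig, crossThreshold]
  split_ifs <;> norm_num

lemma hasSize_crossConfig : HasSize 22 22 crossConfig := by
  intro v hv
  have tracks_subset : ∀ u ∈ westEastTrack ∪ northSouthTrack,
      0 ≤ u.1 ∧ u.1 < ((22 : ℕ) : ℤ) ∧ 0 ≤ u.2 ∧ u.2 < ((22 : ℕ) : ℤ) := by decide
  exact if_neg fun h => hv (tracks_subset v h)

lemma stable_fireOnce_crossConfig_add_single {u : Vertex} {P : Finset Vertex}
    (hu : u ∈ westEastTrack ∪ northSouthTrack) (hP : #P < 168)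
    (h : ∀ v ∈ westEastTrack ∪ northSouthTrack,
      fireOnce (latticeDisk 52) (crossConfig + Pi.single u 1) P v < 168) :
    Stable (latticeDisk 52) (fireOnce (latticeDisk 52) (crossConfig + Pi.single u 1) P) := by
  rw [← card_latticeDisk_52] at hP h
  refine stable_fireOnce_of_support (fun v hv => ?_) hP h
  have hvu : v ≠ u := fun hvu => hv (hvu ▸ hu)
  simp only [Pi.add_apply, crossConfig, if_neg hv, Pi.single_eq_of_ne hvu, add_zero]

lemma stable_fireOnce_westEastTrack :
    Stable (latticeDisk 52)
      (fireOnce (latticeDisk 52) (crossConfig + Pi.single (0, 14) 1) westEastTrack) :=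
  stable_fireOnce_crossConfig_add_single (by decide) (by decide) (by decide +kernel)

lemma stable_fireOnce_northSouthTrack :
    Stable (latticeDisk 52)
      (fireOnce (latticeDisk 52) (crossConfig + Pi.single (10, 0) 1) northSouthTrack) :=
  stable_fireOnce_crossConfig_add_single (by decide) (by decide) (by decide +kernel)

lemma firedAt_westEastTrack :
    firedAt (latticeDisk 52) (crossConfig + Pi.single (0, 14) 1) westEastTrack 4 = {(21, 14)} := by
  decide +kernel

lemma firedAt_northSouthTrack :
    firedAt (latticeDisk 52) (crossConfig + Pi.single (10, 0) 1) northSouthTrack 5 =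
      {(10, 21)} := by
  decide +kernel

theorem crossingConfig_crossConfig :
    CrossingConfig (latticeDisk 52) 22 crossConfig
      (Pi.single 10 1) (Pi.single 14 1) (Pi.single 10 1) (Pi.single 14 1) :=
  have h10 : 10 < 22 := by norm_num
  have h14 : 14 < 22 := by norm_num
  ⟨isUnitVec_single h10, isUnitVec_single h14, isUnitVec_single h10, isUnitVec_single h14,
    stable_crossConfig, hasSize_crossConfig,
    transporterWE_single h14 h14 stable_fireOnce_westEastTrack firedAt_westEastTrack,
    isolatedWS_single h14 stable_fireOnce_westEastTrack (by decide),
    transporterNS_single h10 h10 stable_fireOnce_northSouthTrack firedAt_northSouthTrack,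
    isolatedNE_single h10 stable_fireOnce_northSouthTrack (by decide)⟩

/-- the neighborhood of the closed unit disk with scaling ratio `7.25`,
i.e. `{(x,y) ∈ ℤ² : x² + y² ≤ 7.25²} ∖ {(0,0)}`, can perform crossing. -/
theorem stmt_15 (N : Finset Vertex)
    (hN : (↑N : Set Vertex) =
      {v : Vertex | ((v.1 : ℝ)) ^ 2 + ((v.2 : ℝ)) ^ 2 ≤ (7.25 : ℝ) ^ 2} \
        {((0 : ℤ), (0 : ℤ))}) :
    CanCross N := by
  have hfloor : ⌊(7.25 : ℝ) ^ 2⌋₊ = 52 := by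
    rw [Nat.floor_eq_iff (by positivity)]
    norm_num
  obtain rfl : N = latticeDisk 52 := by
    rw [← coe_inj, hN, ← hfloor, coe_latticeDisk_floor_sq]
  exact ⟨22, crossConfig, _, _, _, _, crossingConfig_crossConfig⟩
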